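/- There exists a constant C > 0 such that for all natural numbers n ≥ 1, |S_{5,0}(n)| ≤ C · n^{ln 5 / ln 16}, i.e. S_{5,0}(n) = O(n^{0.58048...}). -/

import Mathlib

/-- The Newman sum `S_{m,l}(x) = ∑_{0 ≤ n < x, n ≡ l (mod m)} (-1)^{σ(n)}`,
where `σ(n)` is the sum of the binary digits of `n`. -/
def newmanSum (m l x : ℕ) : ℤ :=
  ∑ n ∈ Finset.range x, if n % m = l then (-1 : ℤ) ^ ((Nat.digits 2 n).sum) else 0

/-!
Put `F_z(x) = ∑_{n < x} (-1)^{σ(n)} zⁿ`. Pairing the terms `2n` and `2n + 1` gives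
`F_z(2x) = (1 - z) F_{z²}(x)`, hence `F_z(2ᵏ x) = ∏_{j < k} (1 - z^{2ʲ}) · F_{z^{2ᵏ}}(x)`.
Let `p` be a prime with primitive root `2` and take `k = p - 1`. For a `p`-th root of unity `z`
we have `z^{2ᵏ} = z`, and the product is `0` if `z = 1` and `Φ_p(1) = p` otherwise. So passing from
`x` to `2ᵏ x` multiplies `F_z` by at most `p`, whence `F_z(n) = O(n ^ (log p / log 2ᵏ))`. The Newman
sum is an average of the `F_z` over the `p`-th roots of unity `z`, up to unimodular factors.
-/

open Finset

section Recurrence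

variable {f : ℕ → ℝ} {N : ℕ} {b c : ℝ}

-- Adding `c / (b - 1)` makes the recurrence homogeneous: `-c / (b - 1)` is the fixed point of
-- `y ↦ b * y + c`.
lemma add_div_le_mul_rpow_logb_of_le_mul_div_add (hN : 1 < N) (hb : 1 < b) (hc : 0 ≤ c)
    (hf₀ : 0 ≤ f 0) (hf : ∀ n, f n ≤ b * f (n / N) + c) {n : ℕ} (hn : 1 ≤ n) :
    f n + c / (b - 1) ≤ b * (f 0 + c / (b - 1)) * (n : ℝ) ^ Real.logb N b := by
  have hN' : (1 : ℝ) < N := by exact_mod_cast hN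
  have hb' : 0 < b - 1 := sub_pos.mpr hb
  have exponent_nonneg : 0 ≤ Real.logb N b := Real.logb_nonneg hN' hb.le
  have shifted (n : ℕ) : f n + c / (b - 1) ≤ b * (f (n / N) + c / (b - 1)) := by
    have : b * (c / (b - 1)) = c + c / (b - 1) := by field_simp; ring
    linarith [hf n]
  induction n using Nat.strong_induction_on with
  | _ n ih =>
    refine (shifted n).trans ?_
    rcases lt_or_ge n N with hnN | hNn
    · rw [Nat.div_eq_of_lt hnN]
      exact le_mul_of_one_le_right (by positivity)
        (Real.one_le_rpow (by exact_mod_cast hn) exponent_nonneg)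
    · calc b * (f (n / N) + c / (b - 1))
          ≤ b * (b * (f 0 + c / (b - 1)) * ((n / N : ℕ) : ℝ) ^ Real.logb N b) := by
            gcongr
            exact ih _ (Nat.div_lt_self hn hN) (Nat.div_pos hNn (by lia))
        _ ≤ b * (b * (f 0 + c / (b - 1)) * ((n : ℝ) / N) ^ Real.logb N b) := by
            gcongr
            exact Nat.cast_div_le
        _ = b * (f 0 + c / (b - 1)) * (n : ℝ) ^ Real.logb N b := by
            rw [Real.div_rpow (by positivity) (by positivity),
              Real.rpow_logb (by positivity) hN'.ne' (by positivity)]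
            field_simp

end Recurrence

section ThueMorse

/-- The Thue–Morse sign `(-1)^{σ(n)}`, the summand of the Newman sums. -/
def thueMorseSign (n : ℕ) : ℤ := (-1) ^ (Nat.digits 2 n).sum

lemma thueMorseSign_two_mul (n : ℕ) : thueMorseSign (2 * n) = thueMorseSign n := by
  rcases n.eq_zero_or_pos with rfl | hn
  · rfl
  · simp [thueMorseSign, Nat.digits_base_mul one_lt_two hn]

lemma thueMorseSign_two_mul_add_one (n : ℕ) :
    thueMorseSign (2 * n + 1) = -thueMorseSign n := by
  rw [thueMorseSign, thueMorseSign, add_comm, Nat.digits_add 2 one_lt_two 1 n one_lt_two (by simp)]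
  simp [pow_add]

/-- The sum `∑_{n < x} (-1)^{σ(n)} zⁿ`. At roots of unity `z`, these are the Fourier components of
the Newman sums with respect to the residue. -/
def twistedThueMorseSum {R : Type*} [CommRing R] (z : R) (x : ℕ) : R :=
  ∑ n ∈ range x, (thueMorseSign n : R) * z ^ n

section CommRing

variable {R : Type*} [CommRing R]

lemma twistedThueMorseSum_zero (z : R) : twistedThueMorseSum z 0 = 0 := sum_range_zero _

lemma twistedThueMorseSum_two_mul (z : R) (x : ℕ) :
    twistedThueMorseSum z (2 * x) = (1 - z) * twistedThueMorseSum (z ^ 2) x := by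
  induction x with
  | zero => simp [twistedThueMorseSum]
  | succ x ih =>
    simp only [twistedThueMorseSum] at ih ⊢
    rw [mul_add_one, sum_range_succ, sum_range_succ, ih, sum_range_succ, thueMorseSign_two_mul,
      thueMorseSign_two_mul_add_one]
    push_cast
    ring

lemma twistedThueMorseSum_two_pow_mul (z : R) (k x : ℕ) :
    twistedThueMorseSum z (2 ^ k * x) =
      (∏ j ∈ range k, (1 - z ^ 2 ^ j)) * twistedThueMorseSum (z ^ 2 ^ k) x := by
  induction k generalizing x with
  | zero => simp
  | succ k ih =>
    rw [pow_succ, mul_assoc, ih, twistedThueMorseSum_two_mul, prod_range_succ, pow_mul, mul_assoc]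

end CommRing

section Norm

variable {R : Type*} [NormedCommRing R] [NormOneClass R] {z : R}

lemma norm_thueMorseSign (n : ℕ) : ‖(thueMorseSign n : R)‖ = 1 := by
  rcases neg_one_pow_eq_or ℤ (Nat.digits 2 n).sum with h | h <;> simp [thueMorseSign, h]

lemma norm_twistedThueMorseSum_add_le (hz : ‖z‖ ≤ 1) (x r : ℕ) :
    ‖twistedThueMorseSum z (x + r)‖ ≤ ‖twistedThueMorseSum z x‖ + r := by
  have term_le (n : ℕ) : ‖(thueMorseSign n : R) * z ^ n‖ ≤ 1 :=
    calc ‖(thueMorseSign n : R) * z ^ n‖ ≤ ‖(thueMorseSign n : R)‖ * ‖z ^ n‖ := norm_mul_le _ _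
      _ ≤ 1 := by
        rw [norm_thueMorseSign, one_mul]
        exact (norm_pow_le z n).trans (pow_le_one₀ (norm_nonneg z) hz)
  rw [twistedThueMorseSum, sum_range_add]
  refine (norm_add_le _ _).trans (add_le_add_right ?_ _)
  simpa using norm_sum_le_of_le (range r) fun i _ ↦ term_le (x + i)

lemma norm_twistedThueMorseSum_le_mul_div_add (hz : ‖z‖ ≤ 1) {k : ℕ} (hzk : z ^ 2 ^ k = z) {b : ℝ}
    (hb : ‖∏ j ∈ range k, (1 - z ^ 2 ^ j)‖ ≤ b) (n : ℕ) :
    ‖twistedThueMorseSum z n‖ ≤ b * ‖twistedThueMorseSum z (n / 2 ^ k)‖ + 2 ^ k := by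
  calc ‖twistedThueMorseSum z n‖
      = ‖twistedThueMorseSum z (2 ^ k * (n / 2 ^ k) + n % 2 ^ k)‖ := by rw [Nat.div_add_mod]
    _ ≤ ‖twistedThueMorseSum z (2 ^ k * (n / 2 ^ k))‖ + (n % 2 ^ k : ℕ) :=
      norm_twistedThueMorseSum_add_le hz _ _
    _ ≤ b * ‖twistedThueMorseSum z (n / 2 ^ k)‖ + 2 ^ k := by
      rw [twistedThueMorseSum_two_pow_mul, hzk]
      gcongr
      · exact (norm_mul_le _ _).trans (by gcongr)
      · exact_mod_cast (Nat.mod_lt n (by positivity)).le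

theorem norm_twistedThueMorseSum_le_mul_rpow_logb (hz : ‖z‖ ≤ 1) {k : ℕ} (hk : 0 < k)
    (hzk : z ^ 2 ^ k = z) {b : ℝ} (hb : 1 < b) (hprod : ‖∏ j ∈ range k, (1 - z ^ 2 ^ j)‖ ≤ b)
    {n : ℕ} (hn : 1 ≤ n) :
    ‖twistedThueMorseSum z n‖ ≤ b * (2 ^ k / (b - 1)) * (n : ℝ) ^ Real.logb (2 ^ k) b := by
  have shift_nonneg : 0 ≤ (2 : ℝ) ^ k / (b - 1) := div_nonneg (by positivity) (sub_pos.mpr hb).le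
  have shifted_bound := add_div_le_mul_rpow_logb_of_le_mul_div_add
    (f := fun n ↦ ‖twistedThueMorseSum z n‖) (Nat.one_lt_two_pow hk.ne') hb (by positivity)
    (norm_nonneg _) (norm_twistedThueMorseSum_le_mul_div_add hz hzk hprod) hn
  rw [twistedThueMorseSum_zero, norm_zero, zero_add] at shifted_bound
  push_cast at shifted_bound
  exact (le_add_of_nonneg_right shift_nonneg).trans shifted_bound

end Norm

end ThueMorse

section Cyclotomic

open Polynomial

variable {R : Type*} [CommRing R] [IsDomain R] {z : R}

lemma prod_sub_pow_pow_eq_eval_cyclotomic {m g : ℕ} (hm : 0 < m) (hz : IsPrimitiveRoot z m)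
    (hg : orderOf (g : ZMod m) = m.totient) (x : R) :
    ∏ j ∈ range m.totient, (x - z ^ g ^ j) = (cyclotomic m R).eval x := by
  classical
  have g_coprime : g.Coprime m :=
    (ZMod.isUnit_iff_coprime g m).mp
      (orderOf_pos_iff.mp (hg ▸ Nat.totient_pos.mpr hm)).isUnit
  have pow_injOn : Set.InjOn (fun j ↦ z ^ g ^ j) (range m.totient) := by
    intro i hi j hj hij
    rw [coe_range, ← hg] at hi hj
    refine pow_injOn_Iio_orderOf hi hj ?_
    simpa [← hz.eq_orderOf, ← ZMod.natCast_eq_natCast_iff] using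
      (hz.isOfFinOrder hm.ne').pow_eq_pow_iff_modEq.mp hij
  have image_eq : (range m.totient).image (fun j ↦ z ^ g ^ j) = primitiveRoots m R := by
    refine eq_of_subset_of_card_le (image_subset_iff.mpr fun j _ ↦ ?_) ?_
    · exact (mem_primitiveRoots hm).mpr (hz.pow_of_coprime _ (g_coprime.pow_left j))
    · rw [card_image_of_injOn pow_injOn, card_range, hz.card_primitiveRoots]
  rw [cyclotomic_eq_prod_X_sub_primitiveRoots hz, eval_prod, ← image_eq, prod_image pow_injOn]
  simp

lemma prod_one_sub_pow_two_pow_of_pow_prime_eq_one [DecidableEq R] {p : ℕ}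
    [hp : Fact p.Prime] (h2 : orderOf (2 : ZMod p) = p - 1) (hz : z ^ p = 1) :
    ∏ j ∈ range (p - 1), (1 - z ^ 2 ^ j) = if z = 1 then 0 else (p : R) := by
  split_ifs with hz1
  · exact prod_eq_zero (mem_range.mpr (Nat.sub_pos_of_lt hp.out.one_lt)) (by simp [hz1])
  · have z_primitive : IsPrimitiveRoot z p :=
      IsPrimitiveRoot.iff_orderOf.mpr (orderOf_eq_prime hz hz1)
    rw [← Nat.totient_prime hp.out] at h2 ⊢
    rw [prod_sub_pow_pow_eq_eval_cyclotomic hp.out.pos z_primitive (by exact_mod_cast h2),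
      eval_one_cyclotomic_prime]

end Cyclotomic

section NewmanSum

variable {m l : ℕ}

lemma mul_newmanSum_eq_sum_addChar [NeZero m] (hl : l < m) (x : ℕ) :
    (m : ℂ) * newmanSum m l x =
      ∑ ψ : AddChar (ZMod m) ℂ, ψ (-l) * twistedThueMorseSum (ψ 1) x := by
  have detect_residue (n : ℕ) :
      ∑ ψ : AddChar (ZMod m) ℂ, ψ (-l) * ψ 1 ^ n = if n % m = l then (m : ℂ) else 0 := by
    have residue_iff : (-l + n : ZMod m) = 0 ↔ n % m = l := by
      rw [neg_add_eq_zero, eq_comm, ZMod.natCast_eq_natCast_iff', Nat.mod_eq_of_lt hl]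
    simp_rw [← AddChar.map_nsmul_eq_pow, ← AddChar.map_add_eq_mul, nsmul_one,
      AddChar.sum_apply_eq_ite, residue_iff, ZMod.card]
  simp_rw [twistedThueMorseSum, mul_sum]
  rw [sum_comm, newmanSum, Int.cast_sum, mul_sum]
  refine sum_congr rfl fun n _ ↦ ?_
  simp_rw [mul_left_comm (_ : ℂ) (thueMorseSign n : ℂ), ← mul_sum, detect_residue]
  split_ifs <;> simp [thueMorseSign, mul_comm]

lemma abs_newmanSum_le_of_forall_norm_twistedThueMorseSum_le (hl : l < m) {x : ℕ} {B : ℝ}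
    (hB : ∀ z : ℂ, z ^ m = 1 → ‖twistedThueMorseSum z x‖ ≤ B) :
    |(newmanSum m l x : ℝ)| ≤ B := by
  have : NeZero m := ⟨by lia⟩
  have char_pow (ψ : AddChar (ZMod m) ℂ) : ψ 1 ^ m = 1 := by
    rw [← AddChar.map_nsmul_eq_pow, nsmul_one, ZMod.natCast_self, AddChar.map_zero_eq_one]
  refine le_of_mul_le_mul_left ?_ (Nat.cast_pos.mpr (NeZero.pos m) : (0 : ℝ) < m)
  calc (m : ℝ) * |(newmanSum m l x : ℝ)| = ‖(m : ℂ) * newmanSum m l x‖ := by simp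
    _ = ‖∑ ψ : AddChar (ZMod m) ℂ, ψ (-l) * twistedThueMorseSum (ψ 1) x‖ := by
      rw [mul_newmanSum_eq_sum_addChar hl]
    _ ≤ ∑ _ψ : AddChar (ZMod m) ℂ, B :=
      norm_sum_le_of_le _ fun ψ _ ↦ by
        rw [norm_mul, ψ.norm_apply, one_mul]
        exact hB _ (char_pow ψ)
    _ = m * B := by simp [AddChar.card_eq, ZMod.card]

theorem abs_newmanSum_le_mul_rpow_logb (hl : l < m) {k : ℕ} (hk : 0 < k) (hm : 2 ^ k ≡ 1 [MOD m])
    {b : ℝ} (hb : 1 < b)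
    (hprod : ∀ z : ℂ, z ^ m = 1 → ‖∏ j ∈ range k, (1 - z ^ 2 ^ j)‖ ≤ b) {n : ℕ} (hn : 1 ≤ n) :
    |(newmanSum m l n : ℝ)| ≤ b * (2 ^ k / (b - 1)) * (n : ℝ) ^ Real.logb (2 ^ k) b := by
  refine abs_newmanSum_le_of_forall_norm_twistedThueMorseSum_le hl fun z hz ↦ ?_
  have norm_z : ‖z‖ ≤ 1 := (Complex.norm_eq_one_of_pow_eq_one hz (by lia)).le
  have pow_z : z ^ 2 ^ k = z := by
    have z_finite_order : IsOfFinOrder z := isOfFinOrder_iff_pow_eq_one.mpr ⟨m, by lia, hz⟩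
    simpa using z_finite_order.pow_eq_pow_iff_modEq.mpr
      (hm.of_dvd (orderOf_dvd_of_pow_eq_one hz))
  exact norm_twistedThueMorseSum_le_mul_rpow_logb norm_z hk pow_z hb (hprod z hz) hn

end NewmanSum

theorem stmt_10_general {p l : ℕ} [hp : Fact p.Prime] (h2 : orderOf (2 : ZMod p) = p - 1)
    (hl : l < p) :
    ∃ C : ℝ, 0 < C ∧ ∀ n : ℕ, 1 ≤ n →
      (|newmanSum p l n| : ℝ) ≤ C * (n : ℝ) ^ (Real.log p / Real.log (2 ^ (p - 1))) := by
  have one_lt_p : (1 : ℝ) < p := by exact_mod_cast hp.out.one_lt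
  have two_pow_modEq : 2 ^ (p - 1) ≡ 1 [MOD p] := by
    rw [← ZMod.natCast_eq_natCast_iff]
    simpa [h2] using pow_orderOf_eq_one (2 : ZMod p)
  have prod_le (z : ℂ) (hz : z ^ p = 1) : ‖∏ j ∈ range (p - 1), (1 - z ^ 2 ^ j)‖ ≤ p := by
    rw [prod_one_sub_pow_two_pow_of_pow_prime_eq_one h2 hz]
    split_ifs <;> simp
  refine ⟨p * (2 ^ (p - 1) / (p - 1)), ?_, fun n hn ↦ ?_⟩
  · have : (0 : ℝ) < p - 1 := sub_pos.mpr one_lt_p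
    positivity
  · rw [Real.log_div_log]
    exact abs_newmanSum_le_mul_rpow_logb hl (Nat.sub_pos_of_lt hp.out.one_lt) two_pow_modEq
      one_lt_p prod_le hn

theorem stmt_10 :
    ∃ C : ℝ, 0 < C ∧ ∀ n : ℕ, 1 ≤ n →
      (|newmanSum 5 0 n| : ℝ) ≤ C * (n : ℝ) ^ (Real.log 5 / Real.log 16) := by
  have orderOf_two : orderOf (2 : ZMod 5) = 5 - 1 :=
    orderOf_eq_prime_pow (p := 2) (n := 1) (by decide) (by decide)
  have : Fact (Nat.Prime 5) := ⟨by norm_num⟩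
  have two_pow_four : (2 : ℝ) ^ (5 - 1) = 16 := by norm_num
  simpa only [two_pow_four, Nat.cast_ofNat] using stmt_10_general orderOf_two (by norm_num : 0 < 5)
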